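/- arXiv:1608.04114 — 2 statements merged into one kernel-verified Lean document; each statement's English description precedes it below -/
import Mathlib

section
/- Let α, β > -1 and s ∈ ℕ. Suppose either (a) θ ∈ (-1,1), or (b) θ = -1 and β < 1, or (c) θ = 1 and α < 1. Then there is a constant c > 0 independent of f and n such that for every f ∈ W_2^s(w_{α,β}) and every n ≥ s, ‖f - 𝒮_{n,θ}^{α-s,β-s} f‖_{W_2^s(w_{α,β})} ≤ c · E_{n-s}(f^{(s)})_{L^2(w_{α,β})}. -/
open MeasureTheory Set ENNReal NNReal

noncomputable section

namespace JacobiApprox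

/-- The Jacobi weight `w_{α,β}(x) = (1-x)^α (1+x)^β` on `(-1,1)`. -/
def w (α β x : ℝ) : ℝ := (1 - x) ^ α * (1 + x) ^ β

/-- The weighted `L^p` norm `‖f‖_{L^p(w_{α,β})}`; for `p = ∞` it is the uniform
norm on `[-1,1]`. -/
def LpW (α β : ℝ) (p : ℝ≥0∞) (f : ℝ → ℝ) : ℝ :=
  if p = ⊤ then sSup ((fun x => |f x|) '' Icc (-1 : ℝ) 1)
  else (∫ x in Ioo (-1 : ℝ) 1, |f x| ^ p.toReal * w α β x) ^ (1 / p.toReal)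

/-- Membership in `L^p(w_{α,β})` (`f ∈ C[-1,1]` when `p = ∞`). -/
def MemLpW (α β : ℝ) (p : ℝ≥0∞) (f : ℝ → ℝ) : Prop :=
  Measurable f ∧
    (p ≠ ⊤ → IntegrableOn (fun x => |f x| ^ p.toReal * w α β x) (Ioo (-1 : ℝ) 1)) ∧
    (p = ⊤ → ContinuousOn f (Icc (-1 : ℝ) 1))

/-- `E_n(f)_{L^p(w_{α,β})}`: the error of best approximation of `f` by polynomials
of degree at most `n` in `L^p(w_{α,β})`. -/
def E (α β : ℝ) (p : ℝ≥0∞) (n : ℕ) (f : ℝ → ℝ) : ℝ :=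
  sInf {r : ℝ | ∃ q : Polynomial ℝ, q.natDegree ≤ n ∧
    r = LpW α β p (fun x => f x - q.eval x)}

/-- Membership in the Sobolev space `W_p^s(w_{α,β})`: `f` has `s` continuous
derivatives and `f^{(s)} ∈ L^p(w_{α,β})` (for `p = ∞` this is `f ∈ C^s[-1,1]`). -/
def MemW (α β : ℝ) (p : ℝ≥0∞) (s : ℕ) (f : ℝ → ℝ) : Prop :=
  ContDiff ℝ (s : ℕ∞) f ∧
    (p ≠ ⊤ → IntegrableOn (fun x => |iteratedDeriv s f x| ^ p.toReal * w α β x)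
      (Ioo (-1 : ℝ) 1))

/-- The Sobolev norm `‖f‖_{W_p^s(w_{α,β})}` (max over derivatives when `p = ∞`). -/
def WNorm (α β : ℝ) (p : ℝ≥0∞) (s : ℕ) (f : ℝ → ℝ) : ℝ :=
  if p = ⊤ then
    (Finset.range (s + 1)).sup' (Finset.nonempty_range_iff.mpr (Nat.succ_ne_zero s))
      (fun k => LpW α β ⊤ (iteratedDeriv k f))
  else (∑ k ∈ Finset.range (s + 1), (LpW α β p (iteratedDeriv k f)) ^ p.toReal) ^
    (1 / p.toReal)

/-- Pochhammer symbol (rising factorial) `(a)_k`. -/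
def poch (a : ℝ) (k : ℕ) : ℝ := ∏ i ∈ Finset.range k, (a + i)

/-- The Jacobi polynomial `P_n^{(α,β)}`. -/
def JP (α β : ℝ) (n : ℕ) (t : ℝ) : ℝ :=
  (poch (α + 1) n / n.factorial) *
    ∑ k ∈ Finset.range (n + 1),
      poch (-(n : ℝ)) k * poch ((n : ℝ) + α + β + 1) k /
        (poch (α + 1) k * k.factorial) * ((1 - t) / 2) ^ k

/-- The renormalized Jacobi polynomial `J_n^{α,β} = 2^n/(n+α+β+1)_n · P_n^{(α,β)}`. -/
def J (α β : ℝ) (n : ℕ) (t : ℝ) : ℝ :=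
  2 ^ n / poch ((n : ℝ) + α + β + 1) n * JP α β n t

/-- The inner product `⟨f,g⟩_{α,β} = ∫_{-1}^1 f g w_{α,β}`. -/
def ip (α β : ℝ) (f g : ℝ → ℝ) : ℝ := ∫ x in Ioo (-1 : ℝ) 1, f x * g x * w α β x

/-- `h_n^{α,β} = ⟨J_n^{α,β}, J_n^{α,β}⟩_{α,β}`. -/
def hJ (α β : ℝ) (n : ℕ) : ℝ := ip α β (J α β n) (J α β n)

/-- The Fourier–Jacobi coefficient `\hat f_n^{α,β}`. -/
def coeff (α β : ℝ) (n : ℕ) (f : ℝ → ℝ) : ℝ := ip α β f (J α β n) / hJ α β n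

/-- The `n`-th partial sum `S_n^{α,β} f` of the Fourier–Jacobi series. -/
def S (α β : ℝ) (n : ℕ) (f : ℝ → ℝ) (x : ℝ) : ℝ :=
  ∑ k ∈ Finset.range (n + 1), coeff α β k f * J α β k x

/-- An admissible cut-off function: `C^∞`, `η ≡ 1` on `[0,1]`, `η ≡ 0` on `[2,∞)`. -/
def Admissible (η : ℝ → ℝ) : Prop :=
  ContDiff ℝ (⊤ : ℕ∞) η ∧ (∀ t : ℝ, 0 ≤ t → t ≤ 1 → η t = 1) ∧ ∀ t : ℝ, 2 ≤ t → η t = 0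

/-- The de la Vallée Poussin type operator `V_n^{α,β} f`. -/
def V (η : ℝ → ℝ) (α β : ℝ) (n : ℕ) (f : ℝ → ℝ) (x : ℝ) : ℝ :=
  ∑ k ∈ Finset.range (2 * n + 1), η ((k : ℝ) / (n : ℝ)) * coeff α β k f * J α β k x

/-- The Sobolev orthogonal polynomial `𝒥_{n,θ}^{α-s,β-s}`. -/
def SJ (α β : ℝ) (s : ℕ) (θ : ℝ) (n : ℕ) (x : ℝ) : ℝ :=
  if n < s then (x - θ) ^ n / n.factorial
  else ∫ t in θ..x, (x - t) ^ (s - 1) / (s - 1).factorial * J α β (n - s) t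

/-- The Sobolev inner product `⟨f,g⟩_{α,β}^{-s}`. -/
def ipS (α β : ℝ) (s : ℕ) (θ : ℝ) (lam : ℕ → ℝ) (f g : ℝ → ℝ) : ℝ :=
  ip α β (iteratedDeriv s f) (iteratedDeriv s g) +
    ∑ k ∈ Finset.range s, lam k * iteratedDeriv k f θ * iteratedDeriv k g θ

/-- The Fourier coefficient `\hat{𝔣}_n^{α-s,β-s}` in the Sobolev orthogonal system. -/
def coeffS (α β : ℝ) (s : ℕ) (θ : ℝ) (lam : ℕ → ℝ) (n : ℕ) (f : ℝ → ℝ) : ℝ :=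
  ipS α β s θ lam f (SJ α β s θ n) / ipS α β s θ lam (SJ α β s θ n) (SJ α β s θ n)

/-- The `n`-th partial sum `𝒮_{n,θ}^{α-s,β-s} f` of the Sobolev orthogonal expansion. -/
def SS (α β : ℝ) (s : ℕ) (θ : ℝ) (lam : ℕ → ℝ) (n : ℕ) (f : ℝ → ℝ) (x : ℝ) : ℝ :=
  ∑ k ∈ Finset.range (n + 1), coeffS α β s θ lam k f * SJ α β s θ k x

/-- The operator `𝒱_{n,θ}^{α-s,β-s} f`. -/
def VS (η : ℝ → ℝ) (α β : ℝ) (s : ℕ) (θ : ℝ) (n : ℕ) (f : ℝ → ℝ) (x : ℝ) : ℝ :=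
  (∑ k ∈ Finset.range s, iteratedDeriv k f θ * (x - θ) ^ k / k.factorial) +
    ∫ t in θ..x, (x - t) ^ (s - 1) / (s - 1).factorial *
      V η α β n (iteratedDeriv s f) t

/-- `A_j^{α,β} = (α+β+2)_{2j}/(α+1)_j`. -/
def Acoef (α β : ℝ) (j : ℕ) : ℝ := poch (α + β + 2) (2 * j) / poch (α + 1) j

/-- `B_n^{α,β} = (α+1)_{n+1}/(α+β+2)_{2n+1}`. -/
def Bcoef (α β : ℝ) (n : ℕ) : ℝ := poch (α + 1) (n + 1) / poch (α + β + 2) (2 * n + 1)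

/-- `D_j^{α,β} = (j+β+1)/((2j+α+β+2)(2j+α+β+3))`. -/
def Dcoef (α β : ℝ) (j : ℕ) : ℝ :=
  ((j : ℝ) + β + 1) / ((2 * (j : ℝ) + α + β + 2) * (2 * (j : ℝ) + α + β + 3))

/-- The function `u_{g,k}` of the Aubin–Nitsche duality argument. -/
def u (α β : ℝ) (s k : ℕ) (g : ℝ → ℝ) (x : ℝ) : ℝ :=
  ∫ t in (-1 : ℝ)..x, (x - t) ^ (s - 1) / (s - 1).factorial * (1 / w α β t) *
    ∫ y in t..(1 : ℝ), (y - t) ^ (s - k - 1) / (s - k - 1).factorial * g y * w α β y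

/-- The `s`-th derivative of `u_{g,k}`, given by its explicit formula. -/
def uDs (α β : ℝ) (s k : ℕ) (g : ℝ → ℝ) (x : ℝ) : ℝ :=
  (1 / w α β x) *
    ∫ y in x..(1 : ℝ), (y - x) ^ (s - k - 1) / (s - k - 1).factorial * g y * w α β y


lemma w_nonneg (α β : ℝ) {x : ℝ} (hx : x ∈ Ioo (-1 : ℝ) 1) : 0 ≤ w α β x := by
  unfold w
  have h1 : 0 ≤ 1 - x := by linarith [hx.2]
  have h2 : 0 ≤ 1 + x := by linarith [hx.1]
  positivity

lemma w_pos (α β : ℝ) {x : ℝ} (hx : x ∈ Ioo (-1 : ℝ) 1) : 0 < w α β x := by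
  unfold w
  have h1 : 0 < 1 - x := by linarith [hx.2]
  have h2 : 0 < 1 + x := by linarith [hx.1]
  positivity

lemma w_ii_left (α β : ℝ) (hβ : -1 < β) : IntervalIntegrable (w α β) volume (-1) 0 := by
  have h1 : IntervalIntegrable (fun x : ℝ => (1 + x) ^ β) volume (-1) 0 := by
    have := (intervalIntegral.intervalIntegrable_rpow' (a := 0) (b := 1) hβ).comp_add_left 1
    simpa using this
  have h2 : ContinuousOn (fun x : ℝ => (1 - x) ^ α) (uIcc (-1) 0) := by
    apply ContinuousOn.rpow_const (by fun_prop)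
    intro x hx
    rw [uIcc_of_le (by norm_num)] at hx
    left; linarith [hx.2]
  exact h1.continuousOn_mul h2

lemma w_neg (α β x : ℝ) : w α β (-x) = w β α x := by
  unfold w; rw [mul_comm]; congr 2; ring

lemma w_ii (α β : ℝ) (hα : -1 < α) (hβ : -1 < β) : IntervalIntegrable (w α β) volume (-1) 1 := by
  refine (w_ii_left α β hβ).trans ?_
  have := (w_ii_left β α hα)
  rw [IntervalIntegrable.iff_comp_neg] at this
  have h := this.symm
  simp only [w_neg, neg_zero, neg_neg] at h
  exact h

lemma w_int (α β : ℝ) (hα : -1 < α) (hβ : -1 < β) : IntegrableOn (w α β) (Ioo (-1) 1) := by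
  have := (intervalIntegrable_iff_integrableOn_Ioo_of_le (by norm_num)).1 (w_ii α β hα hβ)
  exact this

lemma cw_int (α β : ℝ) (hα : -1 < α) (hβ : -1 < β) {g : ℝ → ℝ} (hg : Continuous g) :
    IntegrableOn (fun x => g x * w α β x) (Ioo (-1) 1) := by
  have h := (w_ii α β hα hβ).continuousOn_mul hg.continuousOn
  exact (intervalIntegrable_iff_integrableOn_Ioo_of_le (by norm_num)).1 h

/-- one-dimensional ratio bound -/
lemma ratio1 (γ u0 : ℝ) (hu0 : 0 ≤ u0) : ∃ C : ℝ, 0 < C ∧ ∀ u v : ℝ, 0 < u → u < 2 → 0 < v → v < 2 →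
    (u ≤ v ∨ u0 ≤ v) → u ^ γ ≤ C * u ^ (min γ 0) * v ^ (-(if u0 = 0 then max γ 0 else 0)) * v ^ γ := by
  rcases le_total γ 0 with h | h
  · refine ⟨2 ^ (-γ), by positivity, ?_⟩
    intro u v hu hu2 hv hv2 _
    have : (if u0 = 0 then max γ 0 else 0) = 0 := by rw [max_eq_right h]; simp
    rw [this, min_eq_left h]
    simp only [neg_zero, Real.rpow_zero, mul_one]
    have h1 : (2:ℝ) ^ γ ≤ v ^ γ := Real.rpow_le_rpow_of_nonpos hv hv2.le h
    have h2 : (2:ℝ) ^ (-γ) * 2 ^ γ = 1 := by rw [← Real.rpow_add (by norm_num)]; simp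
    have h3 : 0 < u ^ γ := by positivity
    have h4 : (0:ℝ) < 2 ^ (-γ) := by positivity
    calc u ^ γ = 2 ^ (-γ) * u ^ γ * 2 ^ γ := by
          rw [mul_right_comm, h2, one_mul]
      _ ≤ _ := by gcongr
  · rw [min_eq_right h, max_eq_left h]
    by_cases hz : u0 = 0
    · refine ⟨2 ^ γ, by positivity, ?_⟩
      intro u v hu hu2 hv hv2 _
      simp only [hz, if_true, Real.rpow_zero, mul_one]
      rw [mul_assoc, ← Real.rpow_add hv]
      simp only [neg_add_cancel, Real.rpow_zero, mul_one]
      gcongr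
    · have hp : 0 < u0 := lt_of_le_of_ne hu0 (Ne.symm hz)
      refine ⟨1 + (2 / u0) ^ γ, by positivity, ?_⟩
      intro u v hu hu2 hv hv2 hor
      simp only [hz, if_false, neg_zero, Real.rpow_zero, mul_one]
      have hv3 : 0 ≤ v ^ γ := by positivity
      have h5 : 0 ≤ (2 / u0) ^ γ := by positivity
      rcases hor with h1 | h1
      · have : u ^ γ ≤ v ^ γ := by gcongr
        nlinarith
      · have : u ^ γ ≤ (2 / u0 * v) ^ γ := by
          gcongr
          have : 1 ≤ v / u0 := by rw [le_div_iff₀ hp]; linarith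
          calc u ≤ 2 * 1 := by linarith
            _ ≤ 2 * (v / u0) := by gcongr
            _ = _ := by ring
        rw [Real.mul_rpow (by positivity) hv.le] at this
        nlinarith

lemma kernel (α β : ℝ) (hα : -1 < α) (hβ : -1 < β) (θ : ℝ)
    (hθ : θ ∈ Ioo (-1 : ℝ) 1 ∨ (θ = -1 ∧ β < 1) ∨ (θ = 1 ∧ α < 1)) :
    ∃ A B : ℝ → ℝ, IntegrableOn A (Ioo (-1) 1) ∧ IntegrableOn B (Ioo (-1) 1) ∧
      (∀ x ∈ Ioo (-1 : ℝ) 1, 0 ≤ A x) ∧ (∀ x ∈ Ioo (-1 : ℝ) 1, 0 ≤ B x) ∧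
      ∀ x ∈ Ioo (-1 : ℝ) 1, ∀ t ∈ Ioo (min θ x) (max θ x), w α β x ≤ A x * B t * w α β t := by
  have hθ1 : -1 ≤ θ ∧ θ ≤ 1 := by
    rcases hθ with h | ⟨h, _⟩ | ⟨h, _⟩
    · exact ⟨h.1.le, h.2.le⟩
    · rw [h]; norm_num
    · rw [h]; norm_num
  obtain ⟨C1, hC1, H1⟩ := ratio1 α (1 - θ) (by linarith)
  obtain ⟨C2, hC2, H2⟩ := ratio1 β (1 + θ) (by linarith)
  set a := (if 1 - θ = 0 then max α 0 else 0) with ha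
  set b := (if 1 + θ = 0 then max β 0 else 0) with hb
  have ha1 : a < 1 := by
    rw [ha]; split_ifs with h
    · have : θ = 1 := by linarith
      rcases hθ with h | ⟨h, _⟩ | ⟨h, h'⟩
      · linarith [h.2]
      · linarith
      · exact max_lt h' (by norm_num)
    · norm_num
  have hb1 : b < 1 := by
    rw [hb]; split_ifs with h
    · have : θ = -1 := by linarith
      rcases hθ with h | ⟨h, h'⟩ | ⟨h, _⟩
      · linarith [h.1]
      · exact max_lt h' (by norm_num)
      · linarith
    · norm_num
  refine ⟨fun x => C1 * C2 * w (min α 0) (min β 0) x, w (-a) (-b), ?_, ?_, ?_, ?_, ?_⟩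
  · exact (w_int _ _ (lt_min hα (by norm_num)) (lt_min hβ (by norm_num))).const_mul _
  · exact w_int _ _ (by linarith) (by linarith)
  · intro x hx
    have := w_nonneg (min α 0) (min β 0) hx
    positivity
  · intro x hx; exact w_nonneg _ _ hx
  · intro x hx t ht
    have ht1 : -1 < t := lt_of_le_of_lt (le_min hθ1.1 hx.1.le) ht.1
    have ht2 : t < 1 := lt_of_lt_of_le ht.2 (max_le hθ1.2 hx.2.le)
    have e1 := H1 (1 - x) (1 - t) (by linarith [hx.2]) (by linarith [hx.1]) (by linarith) (by linarith)
      (by rcases lt_max_iff.1 ht.2 with h | h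
          · right; linarith
          · left; linarith)
    have e2 := H2 (1 + x) (1 + t) (by linarith [hx.1]) (by linarith [hx.2]) (by linarith) (by linarith)
      (by rcases min_lt_iff.1 ht.1 with h | h
          · right; linarith
          · left; linarith)
    have p1 : 0 ≤ 1 - x := by linarith [hx.2]
    have p2 : 0 ≤ 1 + x := by linarith [hx.1]
    have p3 : 0 ≤ 1 - t := by linarith
    have p4 : 0 ≤ 1 + t := by linarith
    calc w α β x ≤ (C1 * (1 - x) ^ (min α 0) * (1 - t) ^ (-a) * (1 - t) ^ α) *
          (C2 * (1 + x) ^ (min β 0) * (1 + t) ^ (-b) * (1 + t) ^ β) := by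
          unfold w; gcongr
      _ = _ := by unfold w; ring

/-- squared weighted norm -/
def N (α β : ℝ) (g : ℝ → ℝ) : ℝ := ∫ x in Ioo (-1 : ℝ) 1, g x ^ 2 * w α β x

lemma N_nonneg (α β : ℝ) (g : ℝ → ℝ) : 0 ≤ N α β g :=
  setIntegral_nonneg measurableSet_Ioo fun _ hx => mul_nonneg (sq_nonneg _) (w_nonneg _ _ hx)

lemma LpW_two (α β : ℝ) (g : ℝ → ℝ) : LpW α β 2 g = √(N α β g) := by
  unfold LpW N
  rw [if_neg (by simp), Real.sqrt_eq_rpow]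
  simp

lemma hardy (α β : ℝ) (hα : -1 < α) (hβ : -1 < β) (θ : ℝ)
    (hθ : θ ∈ Ioo (-1 : ℝ) 1 ∨ (θ = -1 ∧ β < 1) ∨ (θ = 1 ∧ α < 1)) :
    ∃ C : ℝ, 0 ≤ C ∧ ∀ g h : ℝ → ℝ, Continuous h → (∀ x, HasDerivAt g (h x) x) → g θ = 0 →
      N α β g ≤ C * N α β h := by
  obtain ⟨A, B, hA, hB, hA0, hB0, hAB⟩ := kernel α β hα hβ θ hθ
  have hθ1 : -1 ≤ θ ∧ θ ≤ 1 := by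
    rcases hθ with h | ⟨h, _⟩ | ⟨h, _⟩
    · exact ⟨h.1.le, h.2.le⟩
    · rw [h]; norm_num
    · rw [h]; norm_num
  refine ⟨(∫ x in Ioo (-1 : ℝ) 1, A x) * ∫ x in Ioo (-1 : ℝ) 1, B x, mul_nonneg
    (setIntegral_nonneg measurableSet_Ioo hA0) (setIntegral_nonneg measurableSet_Ioo hB0), ?_⟩
  intro g h hh hg hgθ
  have hgc : Continuous g := continuous_iff_continuousAt.2 fun x => (hg x).continuousAt
  set Bt := ∫ x in Ioo (-1 : ℝ) 1, B x with hBt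
  set M := N α β h with hM
  have key : ∀ x ∈ Ioo (-1 : ℝ) 1, g x ^ 2 * w α β x ≤ A x * (Bt * M) := by
    intro x hx
    have hwx := w_pos α β hx
    set I := Ioo (min θ x) (max θ x) with hI
    have hIsub : I ⊆ Ioo (-1) 1 := by
      intro t ht
      exact ⟨lt_of_le_of_lt (le_min hθ1.1 hx.1.le) ht.1, lt_of_lt_of_le ht.2 (max_le hθ1.2 hx.2.le)⟩
    set K := ∫ t in I, |h t| with hK
    have hgK : |g x| ≤ K := by
      have e : ∫ t in θ..x, h t = g x - g θ :=
        intervalIntegral.integral_eq_sub_of_hasDerivAt (fun y _ => hg y) (hh.intervalIntegrable _ _)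
      rw [hgθ, sub_zero] at e
      rw [← e, hK, hI, ← integral_Ioc_eq_integral_Ioo]
      have := intervalIntegral.norm_integral_le_integral_norm_uIoc (f := h) (a := θ) (b := x) (μ := volume)
      simpa [uIoc] using this
    have hKint : IntegrableOn (fun t => |h t|) I :=
      (hh.abs.integrableOn_Icc (a := min θ x) (b := max θ x)).mono_set Ioo_subset_Icc_self
    have hMint : IntegrableOn (fun t => h t ^ 2 * w α β t) I := (cw_int α β hα hβ (hh.pow 2)).mono_set hIsub
    have hBint := hB.mono_set hIsub
    have hquad : ∀ τ : ℝ, 0 ≤ M * (τ * τ) + (-2 * K) * τ + A x / w α β x * Bt := by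
      intro τ
      have i1 : ∫ t in I, (2 * τ) * |h t| ≤
          ∫ t in I, (τ ^ 2 * (h t ^ 2 * w α β t) + A x / w α β x * B t) := by
        apply setIntegral_mono_on (hKint.const_mul _)
          ((hMint.const_mul _).add (hBint.const_mul _)) measurableSet_Ioo
        intro t ht
        have hwt := w_pos α β (hIsub ht)
        change 2 * τ * |h t| ≤ τ ^ 2 * (h t ^ 2 * w α β t) + A x / w α β x * B t
        have e1 := hAB x hx t ht
        have e2 : 1 / w α β t ≤ A x / w α β x * B t := by
          rw [div_mul_eq_mul_div, div_le_div_iff₀ hwt hwx, one_mul]; exact e1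
        have e3 : 2 * τ * |h t| ≤ τ ^ 2 * (h t ^ 2 * w α β t) + 1 / w α β t := by
          rw [← sub_nonneg]
          have : τ ^ 2 * (h t ^ 2 * w α β t) + 1 / w α β t - 2 * τ * |h t| =
              (τ * |h t| * w α β t - 1) ^ 2 / w α β t := by
            rw [← sq_abs (h t)]; field_simp; ring
          rw [this]; positivity
        linarith
      rw [integral_const_mul, integral_add (hMint.const_mul _) (hBint.const_mul _),
        integral_const_mul, integral_const_mul] at i1
      have i2 : ∫ t in I, h t ^ 2 * w α β t ≤ M :=
        setIntegral_mono_set (cw_int α β hα hβ (hh.pow 2))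
          (by filter_upwards [ae_restrict_mem measurableSet_Ioo] with t ht
              exact mul_nonneg (sq_nonneg _) (w_nonneg _ _ ht))
          hIsub.eventuallyLE
      have i3 : ∫ t in I, B t ≤ Bt :=
        setIntegral_mono_set hB
          (by filter_upwards [ae_restrict_mem measurableSet_Ioo] with t ht
              exact hB0 t ht)
          hIsub.eventuallyLE
      have i4 : 0 ≤ A x / w α β x := div_nonneg (hA0 x hx) hwx.le
      have i5 := mul_le_mul_of_nonneg_left i2 (sq_nonneg τ)
      have i6 := mul_le_mul_of_nonneg_left i3 i4
      nlinarith
    have hd := discrim_le_zero hquad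
    unfold discrim at hd
    have hd2 : K ^ 2 ≤ M * (A x / w α β x * Bt) := by nlinarith
    have hd3 : g x ^ 2 ≤ K ^ 2 := by rw [← sq_abs]; gcongr
    calc g x ^ 2 * w α β x ≤ (M * (A x / w α β x * Bt)) * w α β x := by gcongr; linarith
      _ = _ := by field_simp
  calc N α β g ≤ ∫ x in Ioo (-1 : ℝ) 1, A x * (Bt * M) :=
        setIntegral_mono_on (cw_int α β hα hβ (hgc.pow 2)) (hA.mul_const _) measurableSet_Ioo key
    _ = _ := by rw [integral_mul_const]; ring

/-- coefficients in powers of `(1-t)/2` -/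
def gc (α β : ℝ) (n k : ℕ) : ℝ :=
  2 ^ n / poch ((n : ℝ) + α + β + 1) n * (poch (α + 1) n / n.factorial) *
    (poch (-(n : ℝ)) k * poch ((n : ℝ) + α + β + 1) k / (poch (α + 1) k * k.factorial))

def G (α β : ℝ) (n : ℕ) : Polynomial ℝ :=
  ∑ k ∈ Finset.range (n + 1), Polynomial.monomial k (gc α β n k)

lemma J_eq (α β : ℝ) (n : ℕ) (t : ℝ) : J α β n t = (G α β n).eval ((1 - t) / 2) := by
  unfold J JP G
  rw [Polynomial.eval_finsetSum, Finset.mul_sum, Finset.mul_sum]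
  refine Finset.sum_congr rfl fun k _ => ?_
  rw [Polynomial.eval_monomial]; unfold gc; ring

lemma poch_succ (a : ℝ) (k : ℕ) : poch a (k + 1) = poch a k * (a + k) := by
  unfold poch; rw [Finset.prod_range_succ]

lemma poch_pos {a : ℝ} (ha : 0 < a) (k : ℕ) : 0 < poch a k := by
  unfold poch; exact Finset.prod_pos fun i _ => by positivity

lemma poch_neg_zero (n k : ℕ) (h : n < k) : poch (-(n : ℝ)) k = 0 := by
  unfold poch
  exact Finset.prod_eq_zero (Finset.mem_range.2 h) (by simp)

lemma poch_neg_ne (n : ℕ) : poch (-(n : ℝ)) n ≠ 0 := by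
  unfold poch
  rw [Finset.prod_ne_zero_iff]
  intro i hi
  have : (i : ℝ) < n := by exact_mod_cast Finset.mem_range.1 hi
  intro h; linarith

lemma poch_n_pos (α β : ℝ) (hα : -1 < α) (hβ : -1 < β) (n : ℕ) :
    0 < poch ((n : ℝ) + α + β + 1) n := by
  rcases n with _ | n
  · simp [poch]
  · apply poch_pos; push_cast; linarith [(Nat.cast_nonneg n : (0:ℝ) ≤ n)]

lemma G_coeff (α β : ℝ) (n k : ℕ) : (G α β n).coeff k = gc α β n k := by
  unfold G
  rw [Polynomial.finsetSum_coeff]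
  simp only [Polynomial.coeff_monomial]
  rw [Finset.sum_ite_eq']
  split_ifs with h
  · rfl
  · unfold gc
    rw [poch_neg_zero n k (by simpa using h)]; simp

lemma gc_ne (α β : ℝ) (hα : -1 < α) (hβ : -1 < β) (n : ℕ) : gc α β n n ≠ 0 := by
  unfold gc
  have h1 := poch_n_pos α β hα hβ n
  have h2 := poch_pos (a := α + 1) (by linarith) n
  have h3 := poch_neg_ne n
  have h4 : (0:ℝ) < n.factorial := by exact_mod_cast n.factorial_pos
  positivity

lemma gc_rec (α β : ℝ) (hα : -1 < α) (n k : ℕ) :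
    (k + 1 : ℝ) * (k + α + 1) * gc α β n (k + 1) =
      (k - n : ℝ) * (k + n + α + β + 1) * gc α β n k := by
  unfold gc
  rw [poch_succ, poch_succ, poch_succ, Nat.factorial_succ]
  have h2 := (poch_pos (a := α + 1) (by linarith) k).ne'
  have h4 : (k.factorial : ℝ) ≠ 0 := by exact_mod_cast k.factorial_ne_zero
  have h5 : (k : ℝ) + 1 ≠ 0 := by positivity
  have h6 : α + 1 + k ≠ 0 := by
    have : (0:ℝ) ≤ k := by positivity
    intro h; linarith
  push_cast
  generalize 2 ^ n / poch ((n : ℝ) + α + β + 1) n * (poch (α + 1) n / n.factorial) = c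
  field_simp
  ring

open Polynomial in
lemma G_ode (α β : ℝ) (hα : -1 < α) (n : ℕ) :
    X * derivative (derivative (G α β n)) - X * (X * derivative (derivative (G α β n)))
      + Polynomial.C (α + 1) * derivative (G α β n)
      - Polynomial.C (α + β + 2) * (X * derivative (G α β n))
      + Polynomial.C ((n : ℝ) * (n + α + β + 1)) * G α β n = 0 := by
  ext k
  have hr := gc_rec α β hα n k
  rcases k with _ | _ | k
  · simp [coeff_derivative, G_coeff]
    simp at hr; linear_combination hr
  · simp only [coeff_add, coeff_sub, coeff_C_mul, coeff_X_mul, coeff_X_mul_zero, coeff_derivative,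
      G_coeff, coeff_zero]
    push_cast at hr ⊢; linear_combination hr
  · simp only [coeff_add, coeff_sub, coeff_C_mul, coeff_X_mul, coeff_derivative,
      G_coeff, coeff_zero]
    push_cast at hr ⊢; linear_combination hr

open Polynomial in
lemma G_ode_eval (α β : ℝ) (hα : -1 < α) (n : ℕ) (z : ℝ) :
    z * (1 - z) * (derivative (derivative (G α β n))).eval z
      + ((α + 1) - (α + β + 2) * z) * (derivative (G α β n)).eval z
      + (n : ℝ) * (n + α + β + 1) * (G α β n).eval z = 0 := by
  have := congrArg (Polynomial.eval z) (G_ode α β hα n)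
  simp at this
  linear_combination this

lemma cw2 (α β : ℝ) (hα : -1 < α) (hβ : -1 < β) {f g : ℝ → ℝ} (hf : Continuous f)
    (hg : Continuous g) : IntegrableOn (fun x => f x * g x * w α β x) (Ioo (-1) 1) :=
  cw_int α β hα hβ (hf.mul hg)

lemma csq (α β : ℝ) (hα : -1 < α) (hβ : -1 < β) {f : ℝ → ℝ} (hf : Continuous f) :
    IntegrableOn (fun x => f x ^ 2 * w α β x) (Ioo (-1) 1) :=
  cw_int α β hα hβ (hf.pow 2)

lemma J_cont (α β : ℝ) (n : ℕ) : Continuous (J α β n) := by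
  have : J α β n = fun t => (G α β n).eval ((1 - t) / 2) := funext (J_eq α β n)
  rw [this]; fun_prop

open Polynomial in
lemma J_orth (α β : ℝ) (hα : -1 < α) (hβ : -1 < β) {n m : ℕ} (hnm : n ≠ m) :
    ip α β (J α β n) (J α β m) = 0 := by
  set p := G α β n with hp
  set q := G α β m with hq
  set z : ℝ → ℝ := fun t => (1 - t) / 2 with hz
  set Φ : ℝ → ℝ := fun t => w (α + 1) (β + 1) t *
    ((derivative p).eval (z t) * q.eval (z t) - p.eval (z t) * (derivative q).eval (z t)) with hΦ
  set L : ℝ := 2 * ((n : ℝ) * (n + α + β + 1) - m * (m + α + β + 1)) with hL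
  have hzc : Continuous z := by fun_prop
  have hcont : ContinuousOn Φ (Icc (-1) 1) := by
    apply Continuous.continuousOn
    have : Continuous (w (α + 1) (β + 1)) := by
      unfold w
      exact (Continuous.rpow_const (by fun_prop) fun x => Or.inr (by linarith)).mul
        (Continuous.rpow_const (by fun_prop) fun x => Or.inr (by linarith))
    fun_prop
  have hder : ∀ x ∈ Ioo (-1 : ℝ) 1, HasDerivAt Φ (L * (J α β n x * J α β m x * w α β x)) x := by
    intro x hx
    have h1 : (0:ℝ) < 1 - x := by linarith [hx.2]
    have h2 : (0:ℝ) < 1 + x := by linarith [hx.1]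
    have hzd : HasDerivAt z (-1 / 2) x := by
      exact ((hasDerivAt_id x).const_sub 1).div_const 2
    have pd : ∀ r : Polynomial ℝ, HasDerivAt (fun t => r.eval (z t)) ((derivative r).eval (z x) * (-1 / 2)) x :=
      fun r => (r.hasDerivAt (z x)).comp x hzd
    have wd : HasDerivAt (w (α + 1) (β + 1))
        ((-1) * (α + 1) * (1 - x) ^ (α + 1 - 1) * (1 + x) ^ (β + 1) +
          (1 - x) ^ (α + 1) * (1 * (β + 1) * (1 + x) ^ (β + 1 - 1))) x := by
      have d1 := ((hasDerivAt_id x).const_sub 1).rpow_const (p := α + 1) (Or.inl h1.ne')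
      have d2 := ((hasDerivAt_id x).const_add 1).rpow_const (p := β + 1) (Or.inl h2.ne')
      exact d1.mul d2
    have hd := wd.mul (((pd (derivative p)).mul (pd q)).sub ((pd p).mul (pd (derivative q))))
    refine HasDerivAt.congr_deriv hd ?_
    rw [J_eq, J_eq]
    have o1 := G_ode_eval α β hα n (z x)
    have o2 := G_ode_eval α β hα m (z x)
    rw [← hp] at o1 ⊢
    rw [← hq] at o2 ⊢
    unfold w
    simp only [add_sub_cancel_right, Real.rpow_add_one h1.ne', Real.rpow_add_one h2.ne']
    have hx' : x = 1 - 2 * z x := by rw [hz]; ring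
    change _ = L * (p.eval (z x) * q.eval (z x) * _)
    generalize (1 - x) ^ α = a
    generalize (1 + x) ^ β = b
    simp only [Pi.mul_apply, Pi.sub_apply]
    generalize z x = y at *
    subst hx'
    rw [hL]
    linear_combination (-2 * a * b * q.eval y) * o1 + (2 * a * b * p.eval y) * o2
  have hint : IntegrableOn (fun x => L * (J α β n x * J α β m x * w α β x)) (Ioo (-1) 1) :=
    (cw_int α β hα hβ ((J_cont α β n).mul (J_cont α β m))).const_mul L
  have ftc := intervalIntegral.integral_eq_sub_of_hasDerivAt_of_le (by norm_num) hcont hder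
    ((intervalIntegrable_iff_integrableOn_Ioo_of_le (by norm_num)).2 hint)
  have e1 : Φ 1 = 0 := by
    simp only [hΦ, w]; rw [sub_self, Real.zero_rpow (by linarith)]; simp
  have e2 : Φ (-1) = 0 := by
    simp only [hΦ, w]; rw [add_neg_cancel, Real.zero_rpow (x := β + 1) (by linarith)]; simp
  rw [e1, e2, sub_self, intervalIntegral.integral_of_le (by norm_num), integral_Ioc_eq_integral_Ioo,
    integral_const_mul] at ftc
  have hL0 : L ≠ 0 := by
    have : L = 2 * (((n : ℝ) - m) * (n + m + α + β + 1)) := by rw [hL]; ring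
    rw [this]
    have h1 : (n : ℝ) - m ≠ 0 := sub_ne_zero.2 (by exact_mod_cast hnm)
    have h2 : (1 : ℝ) ≤ n + m := by
      have : 1 ≤ n + m := by omega
      exact_mod_cast this
    have h3 : (n + m + α + β + 1 : ℝ) ≠ 0 := by intro h; linarith
    simp [h1, h3]
  exact (mul_eq_zero.1 ftc).resolve_left hL0

lemma hJ_pos (α β : ℝ) (hα : -1 < α) (hβ : -1 < β) (n : ℕ) : 0 < hJ α β n := by
  unfold hJ ip
  have hnn : ∀ x ∈ Ioo (-1 : ℝ) 1, 0 ≤ J α β n x * J α β n x * w α β x := fun x hx =>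
    mul_nonneg (mul_self_nonneg _) (w_nonneg _ _ hx)
  have hG : G α β n ≠ 0 := by
    intro h
    have := G_coeff α β n n
    rw [h] at this
    exact gc_ne α β hα hβ n (by simpa using this.symm)
  rw [setIntegral_pos_iff_support_of_nonneg_ae
    ((ae_restrict_iff' measurableSet_Ioo).2 (Filter.Eventually.of_forall hnn))
    (cw_int α β hα hβ ((J_cont α β n).mul (J_cont α β n)))]
  have hfin : ((fun t : ℝ => (1 - t) / 2) ⁻¹' {z | (G α β n).IsRoot z}).Finite := by
    apply (Polynomial.finite_setOfPred_isRoot hG).preimage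
    intro a _ b _ h
    simp only at h; linarith
  have hsub : Ioo (-1 : ℝ) 1 \ ((fun t : ℝ => (1 - t) / 2) ⁻¹' {z | (G α β n).IsRoot z}) ⊆
      Function.support (fun x => J α β n x * J α β n x * w α β x) ∩ Ioo (-1) 1 := by
    rintro x ⟨hx, hr⟩
    refine ⟨?_, hx⟩
    have : J α β n x ≠ 0 := by rw [J_eq]; exact hr
    have h2 := (w_pos α β hx).ne'
    simp [this, h2]
  refine lt_of_lt_of_le ?_ (measure_mono hsub)
  rw [measure_sdiff_null (hfin.measure_zero _)]
  simp

lemma ip_add_right (α β : ℝ) (hα : -1 < α) (hβ : -1 < β) {f g h : ℝ → ℝ} (hf : Continuous f)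
    (hg : Continuous g) (hh : Continuous h) :
    ip α β f (fun t => g t + h t) = ip α β f g + ip α β f h := by
  unfold ip
  rw [← integral_add (cw2 α β hα hβ hf hg) (cw2 α β hα hβ hf hh)]
  congr 1; ext x; ring

lemma ip_comm (α β : ℝ) (f g : ℝ → ℝ) : ip α β f g = ip α β g f := by
  unfold ip; congr 1; ext x; ring

lemma ip_smul_right (α β c : ℝ) (f g : ℝ → ℝ) :
    ip α β f (fun t => c * g t) = c * ip α β f g := by
  unfold ip; rw [← integral_const_mul]; congr 1; ext x; ring

lemma orth_poly (α β : ℝ) (hα : -1 < α) (hβ : -1 < β) (r : ℝ → ℝ) (hr : Continuous r) (m : ℕ)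
    (h : ∀ k ≤ m, ip α β r (J α β k) = 0) (p : Polynomial ℝ) (hp : p.natDegree ≤ m) :
    ip α β r (fun t => p.eval ((1 - t) / 2)) = 0 := by
  have main : ∀ j : ℕ, j ≤ m + 1 → ∀ p : Polynomial ℝ, (∀ i, j ≤ i → p.coeff i = 0) →
      ip α β r (fun t => p.eval ((1 - t) / 2)) = 0 := by
    intro j
    induction j with
    | zero =>
      intro _ p hp
      have : p = 0 := by ext i; simpa using hp i (Nat.zero_le i)
      simp [this, ip]
    | succ j ih =>
      intro hj p hp
      set c := p.coeff j / gc α β j j with hc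
      have e := ih (by omega) (p - Polynomial.C c * G α β j) (by
        intro i hi
        rw [Polynomial.coeff_sub, Polynomial.coeff_C_mul, G_coeff]
        rcases Nat.eq_or_lt_of_le hi with h | h
        · subst h; rw [hc, div_mul_cancel₀ _ (gc_ne α β hα hβ j), sub_self]
        · rw [hp i h]; unfold gc; rw [poch_neg_zero j i h]; simp)
      have : (fun t : ℝ => p.eval ((1 - t) / 2)) = fun t =>
          (p - Polynomial.C c * G α β j).eval ((1 - t) / 2) + c * J α β j t := by
        ext t; rw [J_eq]; simp
      rw [this, ip_add_right α β hα hβ (g := fun t : ℝ => (p - Polynomial.C c * G α β j).eval ((1 - t) / 2))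
        (h := fun t => c * J α β j t) hr (by fun_prop)
        (by have := J_cont α β j; fun_prop), e,
        ip_smul_right, h j (by omega)]
      simp
  exact main (m + 1) le_rfl p fun i hi => Polynomial.coeff_eq_zero_of_natDegree_lt (by omega)

lemma S_cont (α β : ℝ) (n : ℕ) (f : ℝ → ℝ) : Continuous (S α β n f) := by
  unfold S
  exact continuous_finsetSum _ fun k _ => continuous_const.mul (J_cont α β k)

lemma ip_S (α β : ℝ) (hα : -1 < α) (hβ : -1 < β) (m : ℕ) (f : ℝ → ℝ) (k : ℕ) (hk : k ≤ m) :
    ip α β (S α β m f) (J α β k) = ip α β f (J α β k) := by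
  have : ip α β (S α β m f) (J α β k) =
      ∑ j ∈ Finset.range (m + 1), coeff α β j f * ip α β (J α β j) (J α β k) := by
    unfold ip S
    simp_rw [← integral_const_mul]
    rw [← integral_finsetSum]
    · congr 1; ext x; rw [Finset.sum_mul, Finset.sum_mul]
      exact Finset.sum_congr rfl fun i _ => by ring
    · intro i _
      exact (cw_int α β hα hβ ((J_cont α β i).mul (J_cont α β k))).const_mul _
  rw [this, Finset.sum_eq_single k]
  · unfold coeff; rw [hJ]; exact div_mul_cancel₀ _ (hJ_pos α β hα hβ k).ne'
  · intro j _ hj; rw [J_orth α β hα hβ hj, mul_zero]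
  · intro h; exact absurd (Finset.mem_range.2 (by omega)) h

lemma best (α β : ℝ) (hα : -1 < α) (hβ : -1 < β) (m : ℕ) (F : ℝ → ℝ) (hF : Continuous F) :
    LpW α β 2 (fun x => F x - S α β m F x) ≤ E α β 2 m F := by
  unfold E
  refine le_csInf ⟨LpW α β 2 (fun x => F x - (0 : Polynomial ℝ).eval x), 0, by simp, rfl⟩ ?_
  rintro _ ⟨q, hq, rfl⟩
  rw [LpW_two, LpW_two]
  apply Real.sqrt_le_sqrt
  have hS := S_cont α β m F
  set r : ℝ → ℝ := fun x => F x - S α β m F x with hr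
  have hrc : Continuous r := hF.sub hS
  have horth : ∀ k ≤ m, ip α β r (J α β k) = 0 := by
    intro k hk
    have h1 := ip_S α β hα hβ m F k hk
    have : r = fun x => F x + (-1) * S α β m F x := by ext x; rw [hr]; ring
    rw [this, ip_comm, ip_add_right α β hα hβ (J_cont α β k) hF (by fun_prop), ip_smul_right,
      ip_comm α β _ F, ip_comm α β _ (S α β m F), h1]
    ring
  set P : Polynomial ℝ := (∑ k ∈ Finset.range (m + 1), Polynomial.C (coeff α β k F) * G α β k) -
    q.comp (1 - Polynomial.C 2 * Polynomial.X) with hP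
  have hPd : P.natDegree ≤ m := by
    apply (Polynomial.natDegree_sub_le _ _).trans
    apply max_le
    · apply Polynomial.natDegree_sum_le_of_forall_le
      intro k hk
      refine (Polynomial.natDegree_C_mul_le _ _).trans ?_
      rw [Polynomial.natDegree_le_iff_coeff_eq_zero]
      intro i hi
      rw [G_coeff]; unfold gc
      rw [poch_neg_zero k i (by have := Finset.mem_range.1 hk; omega)]; simp
    · refine Polynomial.natDegree_comp_le.trans ?_
      have : (1 - Polynomial.C (2:ℝ) * Polynomial.X).natDegree ≤ 1 := by
        compute_degree
      calc _ ≤ q.natDegree * 1 := Nat.mul_le_mul_left _ this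
        _ ≤ m := by omega
  have hPe : ∀ t, P.eval ((1 - t) / 2) = S α β m F t - q.eval t := by
    intro t
    rw [hP, Polynomial.eval_sub, Polynomial.eval_comp, Polynomial.eval_finsetSum]
    unfold S
    congr 1
    · refine Finset.sum_congr rfl fun k _ => ?_
      rw [J_eq]; simp
    · congr 1; simp; ring
  have h0 := orth_poly α β hα hβ r hrc m horth P hPd
  have hPc : Continuous fun t : ℝ => P.eval ((1 - t) / 2) := by fun_prop
  have e : N α β (fun x => F x - q.eval x) = N α β r + 2 * ip α β r (fun t => P.eval ((1 - t) / 2))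
      + N α β (fun t => P.eval ((1 - t) / 2)) := by
    unfold N ip
    have i1 := csq α β hα hβ hrc
    have i2 := (cw2 α β hα hβ hrc hPc).const_mul 2
    have i3 := csq α β hα hβ hPc
    have i4 : IntegrableOn (fun x => r x ^ 2 * w α β x +
        2 * (r x * P.eval ((1 - x) / 2) * w α β x)) (Ioo (-1) 1) := i1.add i2
    rw [← integral_const_mul, ← integral_add i1 i2, ← integral_add i4 i3]
    congr 1; ext x
    simp only [hPe, hr]; ring
  rw [e, h0]
  linarith [N_nonneg α β (fun t => P.eval ((1 - t) / 2))]

/-- integration operator from `θ` -/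
def IA (θ : ℝ) (h : ℝ → ℝ) (x : ℝ) : ℝ := ∫ t in θ..x, h t

lemma IA_hasDerivAt (θ : ℝ) {h : ℝ → ℝ} (hh : Continuous h) (x : ℝ) :
    HasDerivAt (IA θ h) (h x) x :=
  (hh.integral_hasStrictDerivAt θ x).hasDerivAt

lemma IA_cont (θ : ℝ) {h : ℝ → ℝ} (hh : Continuous h) : Continuous (IA θ h) :=
  continuous_iff_continuousAt.2 fun x => (IA_hasDerivAt θ hh x).continuousAt

lemma IA_self (θ : ℝ) (h : ℝ → ℝ) : IA θ h θ = 0 := by simp [IA]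

lemma IAn_cont (θ : ℝ) {h : ℝ → ℝ} (hh : Continuous h) (n : ℕ) : Continuous ((IA θ)^[n] h) := by
  induction n with
  | zero => exact hh
  | succ n ih => rw [Function.iterate_succ_apply']; exact IA_cont θ ih

lemma IAn_self (θ : ℝ) (h : ℝ → ℝ) (n : ℕ) (hn : n ≠ 0) : (IA θ)^[n] h θ = 0 := by
  obtain ⟨m, rfl⟩ := Nat.exists_eq_succ_of_ne_zero hn
  rw [Function.iterate_succ_apply']; exact IA_self θ _

lemma IAn_deriv (θ : ℝ) {h : ℝ → ℝ} (hh : Continuous h) (n : ℕ) :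
    deriv ((IA θ)^[n + 1] h) = (IA θ)^[n] h := by
  ext x
  rw [Function.iterate_succ_apply']
  exact (IA_hasDerivAt θ (IAn_cont θ hh n) x).deriv

lemma IAn_iteratedDeriv (θ : ℝ) {h : ℝ → ℝ} (hh : Continuous h) (n k : ℕ) (hk : k ≤ n) :
    iteratedDeriv k ((IA θ)^[n] h) = (IA θ)^[n - k] h := by
  induction k with
  | zero => simp
  | succ k ih =>
    rw [iteratedDeriv_succ, ih (by omega)]
    have : n - k = (n - (k + 1)) + 1 := by omega
    rw [this, IAn_deriv θ hh]

lemma IAn_contDiff (θ : ℝ) {h : ℝ → ℝ} (hh : Continuous h) (n : ℕ) :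
    ContDiff ℝ n ((IA θ)^[n] h) := by
  induction n with
  | zero => simpa using (contDiff_zero (𝕜 := ℝ)).2 hh
  | succ n ih =>
    have : ((n + 1 : ℕ) : WithTop ℕ∞) = (n : WithTop ℕ∞) + 1 := by push_cast; rfl
    rw [this, contDiff_succ_iff_deriv]
    refine ⟨?_, by simp, ?_⟩
    · intro x
      rw [Function.iterate_succ_apply']
      exact (IA_hasDerivAt θ (IAn_cont θ hh n) x).differentiableAt
    · rw [IAn_deriv θ hh]; exact ih

lemma cauchy_rep (θ x : ℝ) (m : ℕ) : ∀ {h : ℝ → ℝ}, Continuous h →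
    ∫ t in θ..x, (x - t) ^ m / m.factorial * h t = (IA θ)^[m + 1] h x := by
  induction m with
  | zero => intro h hh; simp [IA]
  | succ m ih =>
    intro h hh
    have hu : ∀ y ∈ uIcc θ x, HasDerivAt (fun t => (x - t) ^ (m + 1) / (m + 1).factorial)
        (-((x - y) ^ m / m.factorial)) y := by
      intro y _
      have := (((hasDerivAt_id y).const_sub x).pow (m + 1)).div_const ((m + 1).factorial : ℝ)
      refine this.congr_deriv ?_
      rw [Nat.factorial_succ]
      have h4 : (m.factorial : ℝ) ≠ 0 := by exact_mod_cast m.factorial_ne_zero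
      have h5 : (m : ℝ) + 1 ≠ 0 := by positivity
      push_cast
      simp
      field_simp
    have hp := intervalIntegral.integral_mul_deriv_eq_deriv_mul (a := θ) (b := x) hu
      (fun y _ => IA_hasDerivAt θ hh y) (Continuous.intervalIntegrable (by fun_prop) _ _)
      (hh.intervalIntegrable _ _)
    rw [hp, IA_self, sub_self]
    simp only [neg_mul, intervalIntegral.integral_neg, ih (IA_cont θ hh)]
    rw [Function.iterate_succ_apply _ (m + 1)]
    simp

lemma pow_rep (θ : ℝ) (n : ℕ) :
    (fun x : ℝ => (x - θ) ^ n / n.factorial) = (IA θ)^[n] (fun _ => 1) := by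
  induction n with
  | zero => ext x; simp
  | succ n ih =>
    rw [Function.iterate_succ_apply', ← ih]
    ext x
    unfold IA
    rw [intervalIntegral.integral_eq_sub_of_hasDerivAt
      (f := fun x => (x - θ) ^ (n + 1) / (n + 1).factorial)]
    · simp
    · intro y _
      have := (((hasDerivAt_id y).sub_const θ).pow (n + 1)).div_const ((n + 1).factorial : ℝ)
      refine this.congr_deriv ?_
      rw [Nat.factorial_succ]
      have h4 : (n.factorial : ℝ) ≠ 0 := by exact_mod_cast n.factorial_ne_zero
      have h5 : (n : ℝ) + 1 ≠ 0 := by positivity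
      push_cast
      simp
      field_simp
    · exact Continuous.intervalIntegrable (by fun_prop) _ _

lemma SJ_lt (α β : ℝ) (s : ℕ) (θ : ℝ) (n : ℕ) (h : n < s) :
    SJ α β s θ n = (IA θ)^[n] (fun _ => 1) := by
  rw [← pow_rep]; ext x; simp [SJ, h]

lemma SJ_ge (α β : ℝ) (s : ℕ) (hs : 1 ≤ s) (θ : ℝ) (n : ℕ) (h : s ≤ n) :
    SJ α β s θ n = (IA θ)^[s] (J α β (n - s)) := by
  ext x
  unfold SJ
  rw [if_neg (by omega), cauchy_rep θ x (s - 1) (J_cont α β (n - s))]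
  rw [Nat.sub_add_cancel hs]

lemma SJ_contDiff (α β : ℝ) (s : ℕ) (hs : 1 ≤ s) (θ : ℝ) (n : ℕ) :
    ContDiff ℝ s (SJ α β s θ n) := by
  rcases lt_or_ge n s with h | h
  · rw [SJ_lt α β s θ n h, ← pow_rep]; fun_prop
  · rw [SJ_ge α β s hs θ n h]; exact IAn_contDiff θ (J_cont α β _) s

lemma pow_high (θ : ℝ) (n j : ℕ) :
    iteratedDeriv (n + 1 + j) ((IA θ)^[n] (fun _ => 1)) = fun _ => 0 := by
  induction j with
  | zero =>
    rw [add_zero, iteratedDeriv_succ, IAn_iteratedDeriv θ continuous_const n n le_rfl]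
    ext x; simp
  | succ j ih => rw [← add_assoc, iteratedDeriv_succ, ih]; ext x; simp

lemma SJ_lt_top (α β : ℝ) (s : ℕ) (θ : ℝ) (n k : ℕ) (h : n < s) (hk : n < k) :
    iteratedDeriv k (SJ α β s θ n) = fun _ => 0 := by
  obtain ⟨j, rfl⟩ := Nat.exists_eq_add_of_lt hk
  rw [SJ_lt α β s θ n h, show n + j + 1 = n + 1 + j by ring, pow_high]

lemma SJ_ge_top (α β : ℝ) (s : ℕ) (hs : 1 ≤ s) (θ : ℝ) (n : ℕ) (h : s ≤ n) :
    iteratedDeriv s (SJ α β s θ n) = J α β (n - s) := by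
  rw [SJ_ge α β s hs θ n h, IAn_iteratedDeriv θ (J_cont α β _) s s le_rfl]; simp

lemma SJ_at (α β : ℝ) (s : ℕ) (hs : 1 ≤ s) (θ : ℝ) (n k : ℕ) (hk : k < s) :
    iteratedDeriv k (SJ α β s θ n) θ = if k = n then 1 else 0 := by
  rcases lt_or_ge n s with h | h
  · rcases lt_trichotomy k n with h1 | h1 | h1
    · rw [SJ_lt α β s θ n h, IAn_iteratedDeriv θ continuous_const n k h1.le,
        IAn_self _ _ _ (by omega), if_neg (by omega)]
    · subst h1
      rw [SJ_lt α β s θ k h, IAn_iteratedDeriv θ continuous_const k k le_rfl]; simp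
    · rw [SJ_lt_top α β s θ n k h h1, if_neg (by omega)]
  · rw [SJ_ge α β s hs θ n h, IAn_iteratedDeriv θ (J_cont α β _) s k hk.le,
      IAn_self _ _ _ (by omega), if_neg (by omega)]

lemma coeffS_lt (α β : ℝ) (s : ℕ) (hs : 1 ≤ s) (θ : ℝ) (lam : ℕ → ℝ)
    (hlam : ∀ k, k < s → 0 < lam k) (n : ℕ) (hn : n < s) (f : ℝ → ℝ) :
    coeffS α β s θ lam n f = iteratedDeriv n f θ := by
  have key : ∀ f : ℝ → ℝ, ipS α β s θ lam f (SJ α β s θ n) = lam n * iteratedDeriv n f θ := by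
    intro f
    unfold ipS
    rw [SJ_lt_top α β s θ n s hn hn, Finset.sum_eq_single n]
    · rw [SJ_at α β s hs θ n n hn]; simp [ip]
    · intro k hk hkn
      rw [SJ_at α β s hs θ n k (Finset.mem_range.1 hk), if_neg hkn, mul_zero]
    · intro h; exact absurd (Finset.mem_range.2 hn) h
  unfold coeffS
  rw [key, key, SJ_at α β s hs θ n n hn]
  have := (hlam n hn).ne'
  simp; field_simp

lemma coeffS_ge (α β : ℝ) (s : ℕ) (hs : 1 ≤ s) (θ : ℝ) (lam : ℕ → ℝ)
    (n : ℕ) (hn : s ≤ n) (f : ℝ → ℝ) :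
    coeffS α β s θ lam n f = coeff α β (n - s) (iteratedDeriv s f) := by
  have key : ∀ f : ℝ → ℝ, ipS α β s θ lam f (SJ α β s θ n) =
      ip α β (iteratedDeriv s f) (J α β (n - s)) := by
    intro f
    unfold ipS
    rw [SJ_ge_top α β s hs θ n hn, Finset.sum_eq_zero, add_zero]
    intro k hk
    have := Finset.mem_range.1 hk
    rw [SJ_at α β s hs θ n k this, if_neg (by omega), mul_zero]
  unfold coeffS coeff
  rw [key, key, SJ_ge_top α β s hs θ n hn, hJ]

lemma SS_contDiff (α β : ℝ) (s : ℕ) (hs : 1 ≤ s) (θ : ℝ) (lam : ℕ → ℝ) (n : ℕ) (f : ℝ → ℝ) :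
    ContDiff ℝ s (SS α β s θ lam n f) := by
  unfold SS
  exact ContDiff.sum fun k _ => contDiff_const.mul (SJ_contDiff α β s hs θ k)

lemma SS_iteratedDeriv (α β : ℝ) (s : ℕ) (hs : 1 ≤ s) (θ : ℝ) (lam : ℕ → ℝ) (n : ℕ) (f : ℝ → ℝ)
    (k : ℕ) (hk : k ≤ s) (x : ℝ) : iteratedDeriv k (SS α β s θ lam n f) x =
      ∑ j ∈ Finset.range (n + 1), coeffS α β s θ lam j f * iteratedDeriv k (SJ α β s θ j) x := by
  have hc : ∀ j, ContDiffAt ℝ k (SJ α β s θ j) x := fun j =>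
    ((SJ_contDiff α β s hs θ j).of_le (by exact_mod_cast hk)).contDiffAt
  unfold SS
  rw [iteratedDeriv_fun_sum (fun j _ => contDiffAt_const.mul (hc j))]
  refine Finset.sum_congr rfl fun j _ => ?_
  rw [iteratedDeriv_const_mul_field]

theorem statement16 (α β : ℝ) (hα : -1 < α) (hβ : -1 < β) (s : ℕ) (hs : 1 ≤ s)
    (lam : ℕ → ℝ) (hlam : ∀ k, k < s → 0 < lam k) (θ : ℝ)
    (hθ : θ ∈ Ioo (-1 : ℝ) 1 ∨ (θ = -1 ∧ β < 1) ∨ (θ = 1 ∧ α < 1)) :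
    ∃ c : ℝ, 0 < c ∧ ∀ f : ℝ → ℝ, MemW α β 2 s f → ∀ n : ℕ, s ≤ n →
      WNorm α β 2 s (fun x => f x - SS α β s θ lam n f x)
        ≤ c * E α β 2 (n - s) (iteratedDeriv s f) := by
  obtain ⟨C, hC, H⟩ := hardy α β hα hβ θ hθ
  set D := max C 1 with hD
  have hD1 : 1 ≤ D := le_max_right _ _
  have hD0 : 0 < D := by linarith
  refine ⟨√((s + 1) * D ^ s), by positivity, ?_⟩
  intro f hf n hn
  have hf1 : ContDiff ℝ s f := hf.1
  set g : ℝ → ℝ := fun x => f x - SS α β s θ lam n f x with hg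
  have hgd : ContDiff ℝ s g := hf1.sub (SS_contDiff α β s hs θ lam n f)
  have hgi : ∀ k ≤ s, ∀ x, iteratedDeriv k g x = iteratedDeriv k f x -
      ∑ j ∈ Finset.range (n + 1), coeffS α β s θ lam j f * iteratedDeriv k (SJ α β s θ j) x := by
    intro k hk x
    have hks : (k : WithTop ℕ∞) ≤ s := by exact_mod_cast hk
    rw [hg, iteratedDeriv_fun_sub (hf1.of_le hks).contDiffAt
      ((SS_contDiff α β s hs θ lam n f).of_le hks).contDiffAt,
      SS_iteratedDeriv α β s hs θ lam n f k hk]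
  have hg0 : ∀ k < s, iteratedDeriv k g θ = 0 := by
    intro k hk
    rw [hgi k hk.le, Finset.sum_eq_single k, SJ_at α β s hs θ k k hk,
      coeffS_lt α β s hs θ lam hlam k hk f]
    · simp
    · intro j _ hj
      rw [SJ_at α β s hs θ j k hk, if_neg (Ne.symm hj), mul_zero]
    · intro h; exact absurd (Finset.mem_range.2 (by omega)) h
  have hgs : iteratedDeriv s g = fun x => iteratedDeriv s f x -
      S α β (n - s) (iteratedDeriv s f) x := by
    ext x
    rw [hgi s le_rfl x]
    congr 1
    rw [show n + 1 = s + (n - s + 1) by omega, Finset.sum_range_add, Finset.sum_eq_zero, zero_add]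
    · unfold S
      refine Finset.sum_congr rfl fun i _ => ?_
      rw [coeffS_ge α β s hs θ lam (s + i) (by omega), SJ_ge_top α β s hs θ (s + i) (by omega),
        Nat.add_sub_cancel_left]
    · intro j hj
      have := Finset.mem_range.1 hj
      rw [SJ_lt_top α β s θ j s this this, mul_zero]
  have hFc : Continuous (iteratedDeriv s f) := hf1.continuous_iteratedDeriv s le_rfl
  have hbest := best α β hα hβ (n - s) (iteratedDeriv s f) hFc
  rw [← hgs, LpW_two] at hbest
  set M := N α β (iteratedDeriv s g) with hM
  have hM0 : 0 ≤ M := N_nonneg _ _ _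
  have step : ∀ k < s, N α β (iteratedDeriv k g) ≤ D * N α β (iteratedDeriv (k + 1) g) := by
    intro k hk
    have h1 := H (iteratedDeriv k g) (iteratedDeriv (k + 1) g)
      (hgd.continuous_iteratedDeriv (k + 1) (by exact_mod_cast hk))
      (fun x => by
        rw [iteratedDeriv_succ]
        exact (hgd.differentiable_iteratedDeriv k (by exact_mod_cast hk) x).hasDerivAt)
      (hg0 k hk)
    exact h1.trans (mul_le_mul_of_nonneg_right (le_max_left _ _) (N_nonneg _ _ _))
  have all : ∀ i ≤ s, N α β (iteratedDeriv (s - i) g) ≤ D ^ i * M := by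
    intro i
    induction i with
    | zero => intro _; simp [hM]
    | succ i ih =>
      intro hi
      have h1 := step (s - (i + 1)) (by omega)
      rw [show s - (i + 1) + 1 = s - i by omega] at h1
      calc _ ≤ D * N α β (iteratedDeriv (s - i) g) := h1
        _ ≤ D * (D ^ i * M) := by gcongr; exact ih (by omega)
        _ = _ := by ring
  have hall : ∀ k ∈ Finset.range (s + 1), N α β (iteratedDeriv k g) ≤ D ^ s * M := by
    intro k hk
    have hk' := Finset.mem_range.1 hk
    have := all (s - k) (by omega)
    rw [show s - (s - k) = k by omega] at this
    refine this.trans ?_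
    gcongr
    omega
  have hW : WNorm α β 2 s g = √(∑ k ∈ Finset.range (s + 1), N α β (iteratedDeriv k g)) := by
    unfold WNorm
    rw [if_neg (by simp), Real.sqrt_eq_rpow]
    simp only [LpW_two, ENNReal.toReal_ofNat, Real.rpow_ofNat]
    congr 1
    exact Finset.sum_congr rfl fun k _ => Real.sq_sqrt (N_nonneg _ _ _)
  have hsum : ∑ k ∈ Finset.range (s + 1), N α β (iteratedDeriv k g) ≤ ((s + 1) * D ^ s) * M := by
    refine (Finset.sum_le_sum hall).trans ?_
    rw [Finset.sum_const, Finset.card_range, nsmul_eq_mul]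
    push_cast
    rw [mul_assoc]
  rw [hW]
  calc _ ≤ √(((s + 1) * D ^ s) * M) := Real.sqrt_le_sqrt hsum
    _ = √((s + 1) * D ^ s) * √M := Real.sqrt_mul (by positivity) _
    _ ≤ _ := by gcongr

end JacobiApprox
end
end

section
/- Let α > -1, -1 < β < 1, s ∈ ℕ, 0 ≤ k ≤ s-1, and let g be continuous on [-1,1]. If v ∈ C^s[-1,1] satisfies v^{(j)}(-1) = 0 for 0 ≤ j ≤ s-k-1, then ∫_{-1}^1 u_{g,k}^{(s)}(x) v^{(s-k)}(x) w_{α,β}(x) dx = ∫_{-1}^1 g(x) v(x) w_{α,β}(x) dx. -/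
open MeasureTheory Set ENNReal NNReal

noncomputable section

namespace JacobiApprox

lemma w_integrable (α β : ℝ) (hα : -1 < α) (hβ1 : -1 < β) :
    IntegrableOn (w α β) (Ioo (-1 : ℝ) 1) := by
  have h1 : IntervalIntegrable (w α β) volume (-1) 0 := by
    have h := (intervalIntegral.intervalIntegrable_rpow' (a := 0) (b := 1) hβ1).comp_add_left 1
    norm_num at h
    refine h.continuousOn_mul (g := fun x => (1 - x) ^ α) ?_
    intro x hx
    rw [uIcc_of_le (by norm_num)] at hx
    refine ContinuousAt.continuousWithinAt ?_
    refine ContinuousAt.rpow_const (by fun_prop) (Or.inl ?_)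
    linarith [hx.2]
  have h2 : IntervalIntegrable (w α β) volume 0 1 := by
    have h := (intervalIntegral.intervalIntegrable_rpow' (a := 1) (b := 0) hα).comp_sub_left 1
    norm_num at h
    refine h.mul_continuousOn (g := fun x => (1 + x) ^ β) ?_
    intro x hx
    rw [uIcc_of_le (by norm_num)] at hx
    refine ContinuousAt.continuousWithinAt ?_
    refine ContinuousAt.rpow_const (by fun_prop) (Or.inl ?_)
    linarith [hx.1]
  have h3 := h1.trans h2
  rwa [intervalIntegrable_iff_integrableOn_Ioo_of_le (by norm_num)] at h3

lemma taylor_zero (y : ℝ) (v : ℝ → ℝ) (n : ℕ) (hv : ContDiff ℝ ((n + 1 : ℕ) : ℕ∞) v)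
    (hbc : ∀ j : ℕ, j ≤ n → iteratedDeriv j v (-1) = 0) :
    ∫ x in (-1 : ℝ)..y, (y - x) ^ n / n.factorial * iteratedDeriv (n + 1) v x = v y := by
  induction n with
  | zero =>
    have hd : ∀ x, HasDerivAt v (deriv v x) x := fun x =>
      (hv.differentiable (by simp) x).hasDerivAt
    have hc : Continuous (deriv v) := by
      have := hv.continuous_iteratedDeriv 1 (by simp)
      simpa [iteratedDeriv_one] using this
    have h0 := hbc 0 le_rfl
    simp only [iteratedDeriv_zero] at h0
    have := intervalIntegral.integral_eq_sub_of_hasDerivAt (a := -1) (b := y)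
      (fun x _ => hd x) (hc.intervalIntegrable _ _)
    simp [iteratedDeriv_one, this, h0]
  | succ n ih =>
    have hv' : ContDiff ℝ ((n + 1 : ℕ) : ℕ∞) v := hv.of_le (by norm_cast; simp)
    rw [← ih hv' (fun j hj => hbc j (by omega))]
    have hd : ∀ x, HasDerivAt (iteratedDeriv (n + 1) v) (iteratedDeriv (n + 1 + 1) v x) x := by
      intro x
      rw [iteratedDeriv_succ (n := n + 1)]
      exact (hv.differentiable_iteratedDeriv (n + 1) (by norm_cast; simp) x).hasDerivAt
    have hu : ∀ x, HasDerivAt (fun x : ℝ => (y - x) ^ (n + 1) / (n + 1).factorial)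
        (-((y - x) ^ n / n.factorial)) x := by
      intro x
      have h := ((((hasDerivAt_id x).const_sub y).pow (n + 1)).div_const ((n + 1).factorial : ℝ))
      refine h.congr_deriv ?_
      have : (n.factorial : ℝ) ≠ 0 := by positivity
      have : (n : ℝ) + 1 ≠ 0 := by positivity
      rw [Nat.factorial_succ]
      simp
      field_simp
    have hc : Continuous (iteratedDeriv (n + 1 + 1) v) :=
      hv.continuous_iteratedDeriv _ (by norm_cast)
    have := intervalIntegral.integral_mul_deriv_eq_deriv_mul (a := -1) (b := y)
      (fun x _ => hu x) (fun x _ => hd x)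
      (Continuous.intervalIntegrable (by fun_prop) _ _) (hc.intervalIntegrable _ _)
    rw [this, hbc (n + 1) le_rfl]
    simp

lemma fubini_aux (n : ℕ) (G D : ℝ → ℝ) (hG : IntegrableOn G (Ioo (-1 : ℝ) 1))
    (hD : IntegrableOn D (Ioo (-1 : ℝ) 1)) :
    ∫ x in Ioo (-1 : ℝ) 1, (∫ y in x..(1 : ℝ), (y - x) ^ n / n.factorial * G y) * D x
      = ∫ y in Ioo (-1 : ℝ) 1,
        G y * ∫ x in (-1 : ℝ)..y, (y - x) ^ n / n.factorial * D x := by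
  have hKm : Measurable (fun p : ℝ × ℝ =>
      if p.1 < p.2 then (p.2 - p.1) ^ n / (n.factorial : ℝ) else 0) := by
    refine Measurable.ite (measurableSet_lt measurable_fst measurable_snd) ?_ measurable_const
    fun_prop
  have hprod : Integrable (Function.uncurry fun x y : ℝ =>
      (if x < y then (y - x) ^ n / (n.factorial : ℝ) else 0) * (D x * G y))
      ((volume.restrict (Ioo (-1 : ℝ) 1)).prod (volume.restrict (Ioo (-1 : ℝ) 1))) := by
    refine (Integrable.mul_prod hD hG).bdd_mul (c := 2 ^ n) hKm.aestronglyMeasurable ?_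
    rw [Measure.prod_restrict]
    refine ae_restrict_of_forall_mem (measurableSet_Ioo.prod measurableSet_Ioo) ?_
    rintro ⟨x, y⟩ ⟨hx, hy⟩
    simp only [mem_Ioo] at hx hy
    dsimp only
    split_ifs with h
    · have h0 : 0 ≤ y - x := by linarith
      rw [Real.norm_of_nonneg (by positivity)]
      calc (y - x) ^ n / (n.factorial : ℝ) ≤ (y - x) ^ n :=
            div_le_self (by positivity) (by exact_mod_cast Nat.factorial_pos n)
        _ ≤ 2 ^ n := pow_le_pow_left₀ h0 (by linarith) n
    · simp
  have hsw := integral_integral_swap hprod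
  convert hsw using 1
  · refine setIntegral_congr_fun measurableSet_Ioo ?_
    intro x hx
    dsimp only
    rw [intervalIntegral.integral_of_le hx.2.le, integral_Ioc_eq_integral_Ioo,
      ← integral_mul_const]
    have : Ioo x 1 = Ioo (-1 : ℝ) 1 ∩ Ioi x := by
      ext y; simp only [mem_Ioo, mem_inter_iff, mem_Ioi]
      constructor
      · rintro ⟨a, b⟩; exact ⟨⟨by linarith [hx.1], b⟩, a⟩
      · rintro ⟨⟨a, b⟩, c⟩; exact ⟨c, b⟩
    rw [this, ← setIntegral_indicator measurableSet_Ioi]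
    congr 1
    ext y
    simp only [indicator, mem_Ioi]
    split_ifs <;> ring
  · refine setIntegral_congr_fun measurableSet_Ioo ?_
    intro y hy
    dsimp only
    rw [intervalIntegral.integral_of_le hy.1.le, integral_Ioc_eq_integral_Ioo,
      ← integral_const_mul]
    have : Ioo (-1) y = Ioo (-1 : ℝ) 1 ∩ Iio y := by
      ext x; simp only [mem_Ioo, mem_inter_iff, mem_Iio]
      constructor
      · rintro ⟨a, b⟩; exact ⟨⟨a, by linarith [hy.2]⟩, b⟩
      · rintro ⟨⟨a, b⟩, c⟩; exact ⟨a, c⟩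
    rw [this, ← setIntegral_indicator measurableSet_Iio]
    congr 1
    ext x
    simp only [indicator, mem_Iio]
    split_ifs <;> ring

theorem statement17 (α β : ℝ) (hα : -1 < α) (hβ1 : -1 < β) (hβ2 : β < 1)
    (s k : ℕ) (hs : 1 ≤ s) (hk : k ≤ s - 1)
    (g : ℝ → ℝ) (hg : ContinuousOn g (Icc (-1 : ℝ) 1))
    (v : ℝ → ℝ) (hv : ContDiff ℝ (s : ℕ∞) v)
    (hbc : ∀ j : ℕ, j ≤ s - k - 1 → iteratedDeriv j v (-1) = 0) :
    ∫ x in Ioo (-1 : ℝ) 1, uDs α β s k g x * iteratedDeriv (s - k) v x * w α β x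
      = ∫ x in Ioo (-1 : ℝ) 1, g x * v x * w α β x := by
  obtain ⟨n, hn⟩ : ∃ n, s - k = n + 1 := ⟨s - k - 1, by omega⟩
  have hn' : s - k - 1 = n := by omega
  have hvn : ContDiff ℝ ((n + 1 : ℕ) : ℕ∞) v := hv.of_le (by norm_cast; omega)
  rw [hn'] at hbc
  have hw := w_integrable α β hα hβ1
  obtain ⟨C, hC⟩ := isCompact_Icc.exists_bound_of_continuousOn hg
  have hG : IntegrableOn (fun y => g y * w α β y) (Ioo (-1 : ℝ) 1) := by
    refine Integrable.bdd_mul (c := C) hw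
      ((hg.mono Ioo_subset_Icc_self).aestronglyMeasurable measurableSet_Ioo) ?_
    exact ae_restrict_of_forall_mem measurableSet_Ioo fun x hx => hC x (Ioo_subset_Icc_self hx)
  have hDc : Continuous (iteratedDeriv (n + 1) v) :=
    hvn.continuous_iteratedDeriv _ (by norm_cast)
  have hD : IntegrableOn (iteratedDeriv (n + 1) v) (Ioo (-1 : ℝ) 1) :=
    (hDc.integrableOn_Icc).mono_set Ioo_subset_Icc_self
  have key := fubini_aux n _ _ hG hD
  convert key using 1
  · refine setIntegral_congr_fun measurableSet_Ioo ?_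
    intro x hx
    have hpos : 0 < w α β x :=
      mul_pos (Real.rpow_pos_of_pos (by linarith [hx.2]) _)
        (Real.rpow_pos_of_pos (by linarith [hx.1]) _)
    simp only [uDs, hn, Nat.add_sub_cancel, mul_assoc]
    field_simp
  · refine setIntegral_congr_fun measurableSet_Ioo ?_
    intro y hy
    simp only [taylor_zero y v n hvn hbc]
    ring

end JacobiApprox
end
end
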